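/- With J as above and x, y the 6×6 matrices defined over F_{q^2} by: x the block matrix with blocks I_2, [[0,1],[1,0]], [[−1,a],[0,1]] on the diagonal, and y the block matrix with upper-left 3×3 block the cyclic permutation (e_1↦e_2↦e_3↦e_1) and lower-right 3×3 block [[b/c, e/c^2, d/c^2],[1, −b/c, −b^q/c],[0,1,0]], it holds that x^T·J·x^σ = J and y^T·J·y^σ = J, where σ is entrywise q-th power. -/

import Mathlib

/-- In a field of `q ^ 2` elements the `q`-th power is a ring endomorphism. -/
theorem exists_frob (q : ℕ) (hq : IsPrimePow q) (F : Type*) [Field F] [Fintype F]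
    (hF : Fintype.card F = q ^ 2) : ∃ φ : F →+* F, ∀ t, φ t = t ^ q := by
  obtain ⟨p, k, hp, hk, rfl⟩ := hq
  have hp' : p.Prime := hp.nat_prime
  have : Fact p.Prime := ⟨hp'⟩
  have h0 : (p : F) = 0 := by
    have h1 : ((Fintype.card F : ℕ) : F) = 0 := FiniteField.cast_card_eq_zero F
    rw [hF] at h1
    push_cast at h1
    exact eq_zero_of_pow_eq_zero (eq_zero_of_pow_eq_zero h1)
  have : CharP F p := by
    obtain ⟨r, hr⟩ := CharP.exists F
    have h2 : r ∣ p := (CharP.cast_eq_zero_iff F r p).1 h0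
    rcases (Nat.dvd_prime hp').1 h2 with h | h
    · subst h
      exact absurd rfl (CharP.char_ne_one F 1)
    · subst h; exact hr
  exact ⟨iterateFrobenius F p k, fun t => iterateFrobenius_def p k t⟩

set_option maxHeartbeats 4000000 in
/-- The generators `x`, `y` of equation (2.1) preserve the hermitian form with Gram matrix
`J`: one has `xᵀ J xᵠ = J` and `yᵀ J yᵠ = J`, where `σ` is the entrywise `q`-th power. -/
theorem stmt_14 (q : ℕ) (hq : IsPrimePow q) (F : Type*) [Field F] [Fintype F]
    (hF : Fintype.card F = q ^ 2) (a b c d e : F) (ha : a ^ q ≠ a)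
    (hb : b = 2 * a - a ^ (2 * q))
    (hc : c = a ^ (q + 1) - 4) (hc0 : c ≠ 0)
    (hd : d = 2 * a ^ 3 + 2 * a ^ (3 * q) - 12 * a ^ (q + 1) + 16)
    (he : e = -a ^ (4 * q) + 6 * a ^ (2 * q + 1) - a ^ (q + 3) - 8 * a ^ q)
    (x y J : Matrix (Fin 6) (Fin 6) F)
    (hx : x = !![1, 0, 0, 0, 0, 0;
                 0, 1, 0, 0, 0, 0;
                 0, 0, 0, 1, 0, 0;
                 0, 0, 1, 0, 0, 0;
                 0, 0, 0, 0, -1, a;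
                 0, 0, 0, 0, 0, 1])
    (hy : y = !![0, 0, 1, 0, 0, 0;
                 1, 0, 0, 0, 0, 0;
                 0, 1, 0, 0, 0, 0;
                 0, 0, 0, b / c, e / c ^ 2, d / c ^ 2;
                 0, 0, 0, 1, -(b / c), -(b ^ q / c);
                 0, 0, 0, 0, 1, 0])
    (hJ : J = !![c, 0, 0, 0, 0, 0;
                 0, c, 0, 0, 0, 0;
                 0, 0, c, 0, 0, 0;
                 0, 0, 0, c, 0, 0;
                 0, 0, 0, 0, d / c, e / c;
                 0, 0, 0, 0, e ^ q / c, d / c]) :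
    x.transpose * J * x.map (fun t => t ^ q) = J ∧
      y.transpose * J * y.map (fun t => t ^ q) = J := by
  obtain ⟨φ, hφ⟩ := exists_frob q hq F hF
  have hAq : φ (φ a) = a := by
    rw [hφ, hφ, ← pow_mul, ← pow_two, ← hF, FiniteField.pow_card]
  have e2 : a ^ (2 * q) = (φ a) ^ 2 := by rw [hφ]; ring
  have e3 : a ^ (3 * q) = (φ a) ^ 3 := by rw [hφ]; ring
  have e4 : a ^ (4 * q) = (φ a) ^ 4 := by rw [hφ]; ring
  have e5 : a ^ (q + 1) = φ a * a := by rw [hφ]; ring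
  have e6 : a ^ (2 * q + 1) = (φ a) ^ 2 * a := by rw [hφ]; ring
  have e7 : a ^ (q + 3) = φ a * a ^ 3 := by rw [hφ]; ring
  rw [e2] at hb
  rw [e5] at hc
  rw [e3, e5] at hd
  rw [e4, e6, e7, ← hφ a] at he
  have h2 : φ 2 = 2 := map_ofNat φ 2
  have h4 : φ 4 = 4 := map_ofNat φ 4
  have h6 : φ 6 = 6 := map_ofNat φ 6
  have h8 : φ 8 = 8 := map_ofNat φ 8
  have h12 : φ 12 = 12 := map_ofNat φ 12
  have h16 : φ 16 = 16 := map_ofNat φ 16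
  have hbq : φ b = 2 * φ a - a ^ 2 := by
    rw [hb]; simp [hAq, h2, h4, h6, h8, h12, h16]
  have hcq : φ c = c := by
    rw [hc]; simp [hAq, mul_comm, h4]
  have hdq : φ d = d := by
    rw [hd]; simp [hAq, h2, h4, h6, h8, h12, h16]; ring
  have heq : φ e = -a ^ 4 + 6 * a ^ 2 * φ a - a * (φ a) ^ 3 - 8 * a := by
    rw [he]; simp [hAq, h2, h4, h6, h8, h12, h16]; ring
  simp only [← hφ] at hy hJ ⊢
  have hax : φ a = φ a := rfl
  generalize hA : φ a = A at *
  subst hx hy hJ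
  constructor
  · ext i j
    fin_cases i <;> fin_cases j <;>
      simp [Matrix.mul_apply, Fin.sum_univ_succ, hA] <;>
      (try rw [heq]) <;> field_simp <;> (try rw [hd]) <;> (try rw [he]) <;> ring
  · have hbq2 : φ (φ b) = b := by
      rw [hbq]; simp [hA, hAq, h2]; rw [hb]
    have hm : (!![0, 0, 1, 0, 0, 0;
                 1, 0, 0, 0, 0, 0;
                 0, 1, 0, 0, 0, 0;
                 0, 0, 0, b / c, e / c ^ 2, d / c ^ 2;
                 0, 0, 0, 1, -(b / c), -(φ b / c);
                 0, 0, 0, 0, 1, 0] : Matrix (Fin 6) (Fin 6) F).map (fun t => φ t) =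
               !![0, 0, 1, 0, 0, 0;
                 1, 0, 0, 0, 0, 0;
                 0, 1, 0, 0, 0, 0;
                 0, 0, 0, φ b / c, φ e / c ^ 2, d / c ^ 2;
                 0, 0, 0, 1, -(φ b / c), -(b / c);
                 0, 0, 0, 0, 1, 0] := by
      ext i j
      fin_cases i <;> fin_cases j <;> simp [hcq, hdq, hbq2]
    rw [hm]
    generalize φ b = B at *
    generalize φ e = E at *
    clear hm hbq2
    ext i j
    fin_cases i <;> fin_cases j <;>
      simp [Matrix.mul_apply, Fin.sum_univ_succ] <;>
      field_simp <;> subst hb hd he hbq heq <;> (try rw [hc]) <;> ring
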